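/- Let Ω be a nonempty bounded open set in Euclidean space ℝⁿ with smooth boundary, and let Γ₁ ≤ Γ₂ ≤ ⋯ ≤ Γ_{n+1} be clamped plate eigenvalues on Ω with orthonormal eigenfunctions u₁,…,u_{n+1} satisfying the Rayleigh–Ritz property (as in the context). Then Σ_{i=1}^{n} ((Γ_{i+1} − Γ₁)^{1/2} − Γ₁^{1/2}) ≤ 4 Γ₁^{1/2}. -/

import Mathlib

/-!
Let `u = u₁`, normalized in `L²(Ω)`, and `D = ∫ |∇u|²`. For a unit vector `e` and `c : ℝ` put
`g = ⟪e, ·⟫ - c` and use `g u` as a trial function. Since `Δ²(g u) = g Δ²u + 4 ∂ₑΔu`, integration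
by parts gives
`∫ g u Δ²(g u) = Γ₁ ∫ (g u)² + 2 D + 4 ∫ (∂ₑu)²` (`bilap_affine_mul`,
`integral_affine_mul_dirDeriv_lap`). If `g u` is orthogonal to `u₁, …, u_k`, Rayleigh–Ritz yields
`(Γ_{k+1} - Γ₁) ∫ (g u)² ≤ 2 D + 4 ∫ (∂ₑu)²`. Combined with `∫ g u ∂ₑu = -1/2` and
`0 ≤ ∫ (√(Γ_{k+1} - Γ₁) g u + 2 ∂ₑu)²`, this becomes
`√(Γ_{k+1} - Γ₁) ≤ D + 4 ∫ (∂ₑu)²` (`sqrt_gap_le`).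

Orthogonality is arranged by taking for `e` the members `e₁, …, eₙ` of the Gram–Schmidt orthonormal
basis of the moment vectors `∫ x u₁ u_{j+1}`, with `c` chosen to make `g u` orthogonal to `u₁`.
Summing over this basis gives `∑ √(Γ_{k+1} - Γ₁) ≤ (n + 4) D`, and `D ≤ √Γ₁` because
`D = -∫ u Δu` while `∫ (Δu)² = ∫ u Δ²u = Γ₁` (`dirichletEnergy_le_sqrt`).

No regularity of `∂Ω` enters. All integrations by parts rest on `integral_fderiv_eq_zero`:
`∫_Ω ∂_v F = 0` whenever `F` is `C¹` and vanishes on `∂Ω`. If `∇F` vanishes there as well, the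
extension by zero is differentiable everywhere; in general `F - arctan (k F) / k` has this property,
and `k → ∞` gives the claim because `∂_v F = 0` almost everywhere on `{F = 0}`.
-/

open MeasureTheory Real
open scoped RealInnerProductSpace

/-- The Laplacian `Δf = div (∇f)` of `f : ℝⁿ → ℝ`, as the sum of second partial derivatives. -/
noncomputable def lap {n : ℕ} (f : EuclideanSpace ℝ (Fin n) → ℝ) (x : EuclideanSpace ℝ (Fin n)) : ℝ :=
  ∑ i : Fin n, fderiv ℝ (fun y => fderiv ℝ f y (EuclideanSpace.single i 1)) x
    (EuclideanSpace.single i 1)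

/-- The bi-Laplacian `Δ²f = Δ (Δ f)`. -/
noncomputable def bilap {n : ℕ} (f : EuclideanSpace ℝ (Fin n) → ℝ) :
    EuclideanSpace ℝ (Fin n) → ℝ :=
  lap (lap f)

/-- The derivative `∂_v f` of `f` in the direction `v`, as a function. -/
noncomputable def dirDeriv {n : ℕ} (v : EuclideanSpace ℝ (Fin n))
    (f : EuclideanSpace ℝ (Fin n) → ℝ) : EuclideanSpace ℝ (Fin n) → ℝ :=
  fun x => fderiv ℝ f x v

/-! ### The divergence theorem on a bounded open set -/

section IntegrationByParts

variable {n : ℕ} {Ω : Set (EuclideanSpace ℝ (Fin n))}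

lemma continuous_integrableOn_of_bounded (hΩb : Bornology.IsBounded Ω)
    {f : EuclideanSpace ℝ (Fin n) → ℝ} (hf : Continuous f) : IntegrableOn f Ω :=
  (hf.continuousOn.integrableOn_compact hΩb.isCompact_closure).mono_set subset_closure

/-- The extension by zero of `F` from `Ω` is differentiable everywhere: at a boundary point both
`F` and its derivative vanish, and cutting off to zero keeps the increment `o(‖y - x‖)`. -/
lemma hasFDerivAt_indicator (hΩo : IsOpen Ω) {F : EuclideanSpace ℝ (Fin n) → ℝ}
    (hF : ContDiff ℝ 1 F) (h0 : ∀ x ∈ frontier Ω, F x = 0 ∧ fderiv ℝ F x = 0)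
    (x : EuclideanSpace ℝ (Fin n)) :
    HasFDerivAt (Ω.indicator F) (Ω.indicator (fderiv ℝ F) x) x := by
  have hd : HasFDerivAt F (fderiv ℝ F x) x := (hF.differentiable (by simp) x).hasFDerivAt
  by_cases hx : x ∈ Ω
  · rw [Set.indicator_of_mem hx]
    refine hd.congr_of_eventuallyEq ?_
    filter_upwards [hΩo.mem_nhds hx] with y hy
    simp [hy]
  · rw [Set.indicator_of_notMem hx]
    by_cases hc : x ∈ closure Ω
    · have hfr : x ∈ frontier Ω := ⟨hc, by rwa [hΩo.interior_eq]⟩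
      obtain ⟨h1, h2⟩ := h0 x hfr
      rw [h2] at hd
      rw [hasFDerivAt_iff_isLittleO] at hd ⊢
      simp only [h1, Set.indicator_of_notMem hx, zero_apply, sub_zero] at hd ⊢
      refine Asymptotics.IsBigO.trans_isLittleO ?_ hd
      refine Asymptotics.isBigO_of_le _ fun y => ?_
      exact norm_indicator_le_norm_self F y
    · refine (hasFDerivAt_const (0 : ℝ) x).congr_of_eventuallyEq ?_
      filter_upwards [isClosed_closure.isOpen_compl.mem_nhds hc] with y hy
      exact Set.indicator_of_notMem (fun h => hy (subset_closure h)) _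

lemma integral_fderiv_eq_zero_of_second_order (hΩo : IsOpen Ω) (hΩb : Bornology.IsBounded Ω)
    {F : EuclideanSpace ℝ (Fin n) → ℝ} (hF : ContDiff ℝ 1 F)
    (h0 : ∀ x ∈ frontier Ω, F x = 0 ∧ fderiv ℝ F x = 0) (v : EuclideanSpace ℝ (Fin n)) :
    ∫ x in Ω, fderiv ℝ F x v = 0 := by
  have hG := hasFDerivAt_indicator hΩo hF h0
  have hfd : (fun x => fderiv ℝ (Ω.indicator F) x v) = Ω.indicator (fun x => fderiv ℝ F x v) := by
    funext x
    rw [(hG x).fderiv]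
    by_cases hx : x ∈ Ω <;> simp [hx]
  have hcont : Continuous (fun x => fderiv ℝ F x v) :=
    (hF.continuous_fderiv (by simp)).clm_apply continuous_const
  have hi1 : Integrable (Ω.indicator (fun x => fderiv ℝ F x v)) :=
    (integrable_indicator_iff hΩo.measurableSet).2 (continuous_integrableOn_of_bounded hΩb hcont)
  have hi2 : Integrable (Ω.indicator F) :=
    (integrable_indicator_iff hΩo.measurableSet).2
      (continuous_integrableOn_of_bounded hΩb hF.continuous)
  have key := integral_mul_fderiv_eq_neg_fderiv_mul_of_integrable (𝕜 := ℝ)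
    (μ := (volume : Measure (EuclideanSpace ℝ (Fin n))))
    (f := fun _ => (1 : ℝ)) (g := Ω.indicator F) (v := v) (by simp)
    (by simpa only [one_mul, hfd] using hi1) (by simpa only [one_mul] using hi2)
    (fun x _ => differentiableAt_const _) (fun x _ => (hG x).differentiableAt)
  rw [← integral_indicator hΩo.measurableSet, ← hfd]
  simpa using key

/-- Almost every point of the zero set of a `C¹` function is a critical point in direction `v`. -/
lemma ae_fderiv_eq_zero_of_eq_zero {F : EuclideanSpace ℝ (Fin n) → ℝ} (hF : ContDiff ℝ 1 F)
    (v : EuclideanSpace ℝ (Fin n)) :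
    ∀ᵐ x, F x = 0 → fderiv ℝ F x v = 0 := by
  have hs : MeasurableSet {x | F x = 0} := (isClosed_eq hF.continuous continuous_const).measurableSet
  refine (ae_restrict_iff' hs).1 ?_
  -- On the level set the map `x ↦ F x • v` of the space to itself is the constant `0`, hence
  -- approximated there by the zero linear map with error `0`.
  have happ : ApproximatesLinearOn (fun x => F x • v)
      (0 : EuclideanSpace ℝ (Fin n) →L[ℝ] EuclideanSpace ℝ (Fin n)) {x | F x = 0} 0 := by
    intro x hx y hy
    simp only [Set.mem_ofPred_eq] at hx hy
    simp [hx, hy]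
  have := happ.norm_fderiv_sub_le volume hs (fun x => (fderiv ℝ F x).smulRight v)
    (fun x _ => ((hF.differentiable (by simp) x).hasFDerivAt.smul_const v).hasFDerivWithinAt)
  filter_upwards [this] with x hx
  have h1 : (fderiv ℝ F x).smulRight v = 0 := by
    have := le_antisymm hx zero_le
    simpa only [sub_zero, nnnorm_eq_zero] using this
  have h2 : fderiv ℝ F x v • v = 0 := by
    simpa using congrArg (fun L => L v) h1
  rcases smul_eq_zero.1 h2 with h | h
  · exact h
  · simp [h]

/-- Divergence theorem for a function vanishing on the boundary. No regularity of `∂Ω` is needed: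
`F` is replaced by `F - arctan (k F) / k`, which vanishes to second order at `∂Ω`, and `k → ∞`. -/
lemma integral_fderiv_eq_zero (hΩo : IsOpen Ω) (hΩb : Bornology.IsBounded Ω)
    {F : EuclideanSpace ℝ (Fin n) → ℝ} (hF : ContDiff ℝ 1 F)
    (h0 : ∀ x ∈ frontier Ω, F x = 0) (v : EuclideanSpace ℝ (Fin n)) :
    ∫ x in Ω, fderiv ℝ F x v = 0 := by
  have hcont : Continuous (fun x => fderiv ℝ F x v) :=
    (hF.continuous_fderiv (by simp)).clm_apply continuous_const
  have hint := continuous_integrableOn_of_bounded hΩb hcont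
  have hden : ∀ (k : ℕ) (x : EuclideanSpace ℝ (Fin n)), 0 < 1 + (((k : ℝ) + 1) * F x) ^ 2 :=
    fun k x => by positivity
  have hcontk : ∀ k : ℕ, Continuous fun x => (1 + (((k : ℝ) + 1) * F x) ^ 2)⁻¹ * fderiv ℝ F x v :=
    fun k => ((continuous_const.add ((continuous_const.mul hF.continuous).pow 2)).inv₀
      (fun x => (hden k x).ne')).mul hcont
  have hk : ∀ k : ℕ, ∫ x in Ω, (1 + (((k : ℝ) + 1) * F x) ^ 2)⁻¹ * fderiv ℝ F x v
      = ∫ x in Ω, fderiv ℝ F x v := by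
    intro k
    have hk0 : ((k : ℝ) + 1) ≠ 0 := by positivity
    have hder : ∀ x, HasFDerivAt (fun x => F x - ((k : ℝ) + 1)⁻¹ * arctan (((k : ℝ) + 1) * F x))
        (fderiv ℝ F x - (1 + (((k : ℝ) + 1) * F x) ^ 2)⁻¹ • fderiv ℝ F x) x := by
      intro x
      have hd : HasFDerivAt F (fderiv ℝ F x) x := (hF.differentiable (by simp) x).hasFDerivAt
      have := hd.sub (((hd.const_mul ((k : ℝ) + 1)).arctan).const_mul ((k : ℝ) + 1)⁻¹)
      refine this.congr_fderiv ?_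
      ext w
      simp only [sub_apply, smul_apply, smul_eq_mul, one_div]
      field_simp
    have hCD : ContDiff ℝ 1
        (fun x => F x - ((k : ℝ) + 1)⁻¹ * arctan (((k : ℝ) + 1) * F x)) :=
      hF.sub (contDiff_const.mul (contDiff_const.mul hF).arctan)
    have h := integral_fderiv_eq_zero_of_second_order hΩo hΩb hCD (fun x hx => by
      rw [(hder x).fderiv]
      simp [h0 x hx]) v
    simp only [fun x => (hder x).fderiv, sub_apply,
      smul_apply, smul_eq_mul] at h
    rw [integral_sub hint (continuous_integrableOn_of_bounded hΩb (hcontk k))] at h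
    linarith
  have hlim : Filter.Tendsto
      (fun k : ℕ => ∫ x in Ω, (1 + (((k : ℝ) + 1) * F x) ^ 2)⁻¹ * fderiv ℝ F x v)
      Filter.atTop (nhds (∫ x in Ω, (0 : ℝ))) := by
    refine tendsto_integral_of_dominated_convergence (fun x => ‖fderiv ℝ F x v‖)
      (fun k => (hcontk k).aestronglyMeasurable) hint.norm ?_ ?_
    · refine fun k => Filter.Eventually.of_forall fun x => ?_
      rw [norm_mul, norm_inv, Real.norm_of_nonneg (hden k x).le]
      refine mul_le_of_le_one_left (norm_nonneg _) (inv_le_one_of_one_le₀ ?_)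
      nlinarith [sq_nonneg (((k : ℝ) + 1) * F x)]
    · filter_upwards [ae_restrict_of_ae (ae_fderiv_eq_zero_of_eq_zero hF v)] with x hx
      by_cases hFx : F x = 0
      · simp [hx hFx]
      · rw [← zero_mul (fderiv ℝ F x v)]
        refine Filter.Tendsto.mul_const _ (Filter.Tendsto.inv_tendsto_atTop ?_)
        refine Filter.tendsto_atTop_add_const_left _ _ ?_
        simp only [mul_pow]
        refine Filter.Tendsto.atTop_mul_const (by positivity) ?_
        refine (Filter.tendsto_pow_atTop (by norm_num)).comp ?_
        exact Filter.tendsto_atTop_add_const_right _ _ tendsto_natCast_atTop_atTop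
  simp only [hk, integral_zero] at hlim
  exact tendsto_nhds_unique tendsto_const_nhds hlim

end IntegrationByParts

/-! ### Directional derivatives and the Laplacian of smooth functions -/

section Calculus

variable {n : ℕ} {f g : EuclideanSpace ℝ (Fin n) → ℝ}

lemma dirDeriv_smooth (v : EuclideanSpace ℝ (Fin n)) (hf : ContDiff ℝ (⊤ : ℕ∞) f) :
    ContDiff ℝ (⊤ : ℕ∞) (dirDeriv v f) :=
  (hf.fderiv_right (m := (⊤ : ℕ∞)) (by simp)).clm_apply contDiff_const

lemma lap_eq_sum_dirDeriv (f : EuclideanSpace ℝ (Fin n) → ℝ) :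
    lap f = fun x => ∑ k, dirDeriv (EuclideanSpace.single k 1)
      (dirDeriv (EuclideanSpace.single k 1) f) x := rfl

lemma lap_smooth (hf : ContDiff ℝ (⊤ : ℕ∞) f) : ContDiff ℝ (⊤ : ℕ∞) (lap f) := by
  rw [lap_eq_sum_dirDeriv]
  exact ContDiff.sum fun k _ => dirDeriv_smooth _ (dirDeriv_smooth _ hf)

lemma dirDeriv_add (v : EuclideanSpace ℝ (Fin n)) (hf : ContDiff ℝ (⊤ : ℕ∞) f)
    (hg : ContDiff ℝ (⊤ : ℕ∞) g) :
    dirDeriv v (fun x => f x + g x) = fun x => dirDeriv v f x + dirDeriv v g x := by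
  funext x
  simp only [dirDeriv]
  rw [fderiv_fun_add (hf.differentiable (by simp) x) (hg.differentiable (by simp) x)]
  rfl

lemma dirDeriv_const_mul (v : EuclideanSpace ℝ (Fin n)) (c : ℝ) (hf : ContDiff ℝ (⊤ : ℕ∞) f) :
    dirDeriv v (fun x => c * f x) = fun x => c * dirDeriv v f x := by
  funext x
  simp only [dirDeriv]
  rw [fderiv_const_mul (hf.differentiable (by simp) x)]
  rfl

lemma dirDeriv_mul (v : EuclideanSpace ℝ (Fin n)) (hf : ContDiff ℝ (⊤ : ℕ∞) f)
    (hg : ContDiff ℝ (⊤ : ℕ∞) g) :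
    dirDeriv v (fun x => f x * g x) = fun x => dirDeriv v f x * g x + f x * dirDeriv v g x := by
  funext x
  simp only [dirDeriv]
  rw [fderiv_fun_mul (hf.differentiable (by simp) x) (hg.differentiable (by simp) x)]
  simp only [add_apply, smul_apply, smul_eq_mul]
  ring

lemma dirDeriv_comm (v w : EuclideanSpace ℝ (Fin n)) (hf : ContDiff ℝ (⊤ : ℕ∞) f) :
    dirDeriv v (dirDeriv w f) = dirDeriv w (dirDeriv v f) := by
  funext x
  have hd : DifferentiableAt ℝ (fderiv ℝ f) x :=
    (hf.fderiv_right (m := (⊤ : ℕ∞)) (by simp)).differentiable (by simp) x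
  have h := (hf.contDiffAt (x := x)).isSymmSndFDerivAt (by simp; exact WithTop.coe_le_coe.2 le_top)
  have key : ∀ a b : EuclideanSpace ℝ (Fin n),
      dirDeriv a (dirDeriv b f) x = fderiv ℝ (fderiv ℝ f) x a b := by
    intro a b
    unfold dirDeriv
    rw [fderiv_clm_apply hd (differentiableAt_const b)]
    simp
  rw [key, key]
  exact h v w

lemma dirDeriv_sum {ι : Type*} (s : Finset ι) (v : EuclideanSpace ℝ (Fin n))
    {F : ι → EuclideanSpace ℝ (Fin n) → ℝ} (hF : ∀ i, ContDiff ℝ (⊤ : ℕ∞) (F i)) :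
    dirDeriv v (fun x => ∑ i ∈ s, F i x) = fun x => ∑ i ∈ s, dirDeriv v (F i) x := by
  funext x
  simp only [dirDeriv]
  rw [fderiv_fun_sum fun i _ => (hF i).differentiable (by simp) x]
  simp

lemma lap_dirDeriv (v : EuclideanSpace ℝ (Fin n)) (hf : ContDiff ℝ (⊤ : ℕ∞) f) :
    lap (dirDeriv v f) = dirDeriv v (lap f) := by
  rw [lap_eq_sum_dirDeriv, lap_eq_sum_dirDeriv,
    dirDeriv_sum _ _ fun k => dirDeriv_smooth _ (dirDeriv_smooth _ hf)]
  funext x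
  refine Finset.sum_congr rfl fun k _ => ?_
  rw [dirDeriv_comm _ v hf, dirDeriv_comm _ v (dirDeriv_smooth _ hf)]

lemma lap_add (hf : ContDiff ℝ (⊤ : ℕ∞) f) (hg : ContDiff ℝ (⊤ : ℕ∞) g) :
    lap (fun x => f x + g x) = fun x => lap f x + lap g x := by
  simp only [lap_eq_sum_dirDeriv, dirDeriv_add _ hf hg,
    dirDeriv_add _ (dirDeriv_smooth _ hf) (dirDeriv_smooth _ hg), Finset.sum_add_distrib]

lemma lap_const_mul (c : ℝ) (hf : ContDiff ℝ (⊤ : ℕ∞) f) :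
    lap (fun x => c * f x) = fun x => c * lap f x := by
  simp only [lap_eq_sum_dirDeriv, dirDeriv_const_mul _ c hf,
    dirDeriv_const_mul _ c (dirDeriv_smooth _ hf), Finset.mul_sum]

lemma affine_smooth (e : EuclideanSpace ℝ (Fin n)) (c : ℝ) :
    ContDiff ℝ (⊤ : ℕ∞) (fun x : EuclideanSpace ℝ (Fin n) => ⟪e, x⟫ - c) :=
  (contDiff_const.inner ℝ contDiff_id).sub contDiff_const

lemma dirDeriv_affine (v e : EuclideanSpace ℝ (Fin n)) (c : ℝ) :
    dirDeriv v (fun x => ⟪e, x⟫ - c) = fun _ => ⟪e, v⟫ := by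
  funext x
  have h : HasFDerivAt (fun x : EuclideanSpace ℝ (Fin n) => ⟪e, x⟫ - c) (innerSL ℝ e) x :=
    (innerSL ℝ e).hasFDerivAt.sub_const c
  simp [dirDeriv, h.fderiv]

lemma sum_inner_mul_dirDeriv (e : EuclideanSpace ℝ (Fin n)) (f : EuclideanSpace ℝ (Fin n) → ℝ)
    (x : EuclideanSpace ℝ (Fin n)) :
    ∑ k, ⟪e, EuclideanSpace.single k 1⟫ * dirDeriv (EuclideanSpace.single k 1) f x
      = dirDeriv e f x := by
  have h : e = ∑ k, ⟪e, EuclideanSpace.single k (1 : ℝ)⟫ • EuclideanSpace.single k (1 : ℝ) := by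
    have := (EuclideanSpace.basisFun (Fin n) ℝ).sum_repr' e
    simp only [EuclideanSpace.basisFun_apply] at this
    conv_lhs => rw [← this]
    exact Finset.sum_congr rfl fun k _ => by rw [real_inner_comm]
  conv_rhs => rw [dirDeriv, h, map_sum]
  simp [dirDeriv]

/-- `Δ(g f) = g Δf + 2 ∂ₑf` for the affine function `g = ⟪e, ·⟫ - c`. -/
lemma lap_affine_mul (e : EuclideanSpace ℝ (Fin n)) (c : ℝ) (hf : ContDiff ℝ (⊤ : ℕ∞) f) :
    lap (fun x => (⟪e, x⟫ - c) * f x)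
      = fun x => (⟪e, x⟫ - c) * lap f x + 2 * dirDeriv e f x := by
  have hg := affine_smooth e c
  funext x
  rw [← sum_inner_mul_dirDeriv e f x]
  simp only [lap_eq_sum_dirDeriv, Finset.mul_sum, ← Finset.sum_add_distrib]
  refine Finset.sum_congr rfl fun k _ => ?_
  rw [dirDeriv_mul _ hg hf, dirDeriv_affine,
    dirDeriv_add _ (contDiff_const.mul hf) (hg.mul (dirDeriv_smooth _ hf)),
    dirDeriv_const_mul _ _ hf, dirDeriv_mul _ hg (dirDeriv_smooth _ hf), dirDeriv_affine]
  ring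

/-- `Δ²(g f) = g Δ²f + 4 ∂ₑΔf` for the affine function `g = ⟪e, ·⟫ - c`. -/
lemma bilap_affine_mul (e : EuclideanSpace ℝ (Fin n)) (c : ℝ) (hf : ContDiff ℝ (⊤ : ℕ∞) f) :
    bilap (fun x => (⟪e, x⟫ - c) * f x)
      = fun x => (⟪e, x⟫ - c) * bilap f x + 4 * dirDeriv e (lap f) x := by
  unfold bilap
  rw [lap_affine_mul e c hf, lap_add ((affine_smooth e c).mul (lap_smooth hf))
    (contDiff_const.mul (dirDeriv_smooth e hf)), lap_affine_mul e c (lap_smooth hf),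
    lap_const_mul _ (dirDeriv_smooth e hf), lap_dirDeriv e hf]
  funext x
  ring

/-- The squared length of the gradient can be computed in any orthonormal basis. -/
lemma sum_sq_dirDeriv (b : OrthonormalBasis (Fin n) ℝ (EuclideanSpace ℝ (Fin n)))
    (f : EuclideanSpace ℝ (Fin n) → ℝ) (x : EuclideanSpace ℝ (Fin n)) :
    ∑ k, (dirDeriv (b k) f x) ^ 2 = ∑ k, (dirDeriv (EuclideanSpace.single k 1) f x) ^ 2 := by
  have key : ∀ b : OrthonormalBasis (Fin n) ℝ (EuclideanSpace ℝ (Fin n)),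
      ∑ k, (dirDeriv (b k) f x) ^ 2
        = ‖(InnerProductSpace.toDual ℝ (EuclideanSpace ℝ (Fin n))).symm (fderiv ℝ f x)‖ ^ 2 := by
    intro b
    rw [← b.sum_sq_norm_inner_left]
    simp [dirDeriv, InnerProductSpace.toDual_symm_apply]
  have h2 := key (EuclideanSpace.basisFun (Fin n) ℝ)
  simp only [EuclideanSpace.basisFun_apply] at h2
  rw [key b, h2]

end Calculus

/-! ### Integral identities for clamped functions -/

section Identities

variable {n : ℕ} {Ω : Set (EuclideanSpace ℝ (Fin n))} {f g u : EuclideanSpace ℝ (Fin n) → ℝ}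

lemma integral_dirDeriv_mul (hΩo : IsOpen Ω) (hΩb : Bornology.IsBounded Ω)
    (hf : ContDiff ℝ (⊤ : ℕ∞) f) (hg : ContDiff ℝ (⊤ : ℕ∞) g)
    (h0 : ∀ x ∈ frontier Ω, f x = 0) (v : EuclideanSpace ℝ (Fin n)) :
    ∫ x in Ω, dirDeriv v f x * g x = -∫ x in Ω, f x * dirDeriv v g x := by
  have h : ∫ x in Ω, dirDeriv v (fun x => f x * g x) x = 0 :=
    integral_fderiv_eq_zero hΩo hΩb ((hf.mul hg).of_le (by simp))
      (fun x hx => by simp [h0 x hx]) v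
  rw [dirDeriv_mul v hf hg, integral_add
    (continuous_integrableOn_of_bounded hΩb ((dirDeriv_smooth v hf).continuous.fun_mul hg.continuous))
    (continuous_integrableOn_of_bounded hΩb (hf.continuous.fun_mul (dirDeriv_smooth v hg).continuous))]
    at h
  linarith

/-- Green's first identity. -/
lemma integral_mul_lap (hΩo : IsOpen Ω) (hΩb : Bornology.IsBounded Ω)
    (hf : ContDiff ℝ (⊤ : ℕ∞) f) (hg : ContDiff ℝ (⊤ : ℕ∞) g)
    (h0 : ∀ x ∈ frontier Ω, f x = 0) :
    ∫ x in Ω, f x * lap g x = -∑ k, ∫ x in Ω, dirDeriv (EuclideanSpace.single k 1) f x *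
      dirDeriv (EuclideanSpace.single k 1) g x := by
  simp only [lap_eq_sum_dirDeriv, Finset.mul_sum]
  rw [integral_finsetSum _ fun k _ => continuous_integrableOn_of_bounded hΩb
    (hf.continuous.fun_mul (dirDeriv_smooth _ (dirDeriv_smooth _ hg)).continuous),
    ← Finset.sum_neg_distrib]
  refine Finset.sum_congr rfl fun k _ => ?_
  rw [integral_dirDeriv_mul hΩo hΩb hf (dirDeriv_smooth _ hg) h0]
  ring

/-- The Dirichlet energy `∫_Ω |∇u|²`. -/
noncomputable def dirichletEnergy (Ω : Set (EuclideanSpace ℝ (Fin n)))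
    (u : EuclideanSpace ℝ (Fin n) → ℝ) : ℝ :=
  ∑ k, ∫ x in Ω, (dirDeriv (EuclideanSpace.single k 1) u x) ^ 2

lemma sum_integral_sq_dirDeriv (hΩb : Bornology.IsBounded Ω) (hu : ContDiff ℝ (⊤ : ℕ∞) u)
    (b : OrthonormalBasis (Fin n) ℝ (EuclideanSpace ℝ (Fin n))) :
    ∑ k, ∫ x in Ω, (dirDeriv (b k) u x) ^ 2 = dirichletEnergy Ω u := by
  unfold dirichletEnergy
  rw [← integral_finsetSum _ fun k _ => continuous_integrableOn_of_bounded hΩb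
      ((dirDeriv_smooth _ hu).continuous.fun_pow 2),
    ← integral_finsetSum _ fun k _ => continuous_integrableOn_of_bounded hΩb
      ((dirDeriv_smooth _ hu).continuous.fun_pow 2)]
  simp only [sum_sq_dirDeriv b u]

lemma integral_mul_lap_self (hΩo : IsOpen Ω) (hΩb : Bornology.IsBounded Ω)
    (hu : ContDiff ℝ (⊤ : ℕ∞) u) (h0 : ∀ x ∈ frontier Ω, u x = 0) :
    ∫ x in Ω, u x * lap u x = -dirichletEnergy Ω u := by
  rw [integral_mul_lap hΩo hΩb hu hu h0]
  simp only [dirichletEnergy, pow_two]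

lemma integral_lap_sq (hΩo : IsOpen Ω) (hΩb : Bornology.IsBounded Ω)
    (hu : ContDiff ℝ (⊤ : ℕ∞) u) (h0 : ∀ x ∈ frontier Ω, u x = 0 ∧ fderiv ℝ u x = 0) :
    ∫ x in Ω, (lap u x) ^ 2 = ∫ x in Ω, u x * bilap u x := by
  unfold bilap
  rw [integral_mul_lap hΩo hΩb hu (lap_smooth hu) fun x hx => (h0 x hx).1]
  have h1 : ∀ x, (lap u x) ^ 2 = ∑ k, dirDeriv (EuclideanSpace.single k 1)
      (dirDeriv (EuclideanSpace.single k 1) u) x * lap u x := by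
    intro x
    rw [← Finset.sum_mul, pow_two]
    rfl
  simp only [h1]
  rw [integral_finsetSum _ fun k _ => continuous_integrableOn_of_bounded hΩb
    ((dirDeriv_smooth _ (dirDeriv_smooth _ hu)).continuous.fun_mul (lap_smooth hu).continuous),
    ← Finset.sum_neg_distrib]
  refine Finset.sum_congr rfl fun k _ => ?_
  exact integral_dirDeriv_mul hΩo hΩb (dirDeriv_smooth _ hu) (lap_smooth hu)
    (fun x hx => by simp [dirDeriv, (h0 x hx).2]) _

/-- Since `f ∂ₑf = ∂ₑ(f²) / 2`, integration by parts moves `∂ₑ` onto the affine weight. -/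
lemma integral_affine_mul_dirDeriv (hΩo : IsOpen Ω) (hΩb : Bornology.IsBounded Ω)
    (hf : ContDiff ℝ (⊤ : ℕ∞) f) (h0 : ∀ x ∈ frontier Ω, f x = 0)
    {e : EuclideanSpace ℝ (Fin n)} (he : ‖e‖ = 1) (c : ℝ) :
    ∫ x in Ω, (⟪e, x⟫ - c) * f x * dirDeriv e f x = -(1 / 2) * ∫ x in Ω, (f x) ^ 2 := by
  have h := integral_dirDeriv_mul hΩo hΩb (hf.mul hf) (affine_smooth e c)
    (fun x hx => by simp [h0 x hx]) e
  rw [dirDeriv_mul e hf hf, dirDeriv_affine, real_inner_self_eq_norm_sq, he] at h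
  have h1 : ∫ x in Ω, (dirDeriv e f x * f x + f x * dirDeriv e f x) * (⟪e, x⟫ - c)
      = 2 * ∫ x in Ω, (⟪e, x⟫ - c) * f x * dirDeriv e f x := by
    rw [← integral_const_mul]
    congr 1
    funext x
    ring
  have h2 : ∫ x in Ω, f x * f x * (1 : ℝ) ^ 2 = ∫ x in Ω, (f x) ^ 2 := by
    congr 1
    funext x
    ring
  rw [h1, h2] at h
  linarith

/-- The commutator identity behind the estimate, with `g = ⟪e, ·⟫ - c` and `e` a unit vector:
`4 ∫ g u ∂ₑΔu = 2 ∫ |∇u|² + 4 ∫ (∂ₑu)²`. -/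
lemma integral_affine_mul_dirDeriv_lap (hΩo : IsOpen Ω) (hΩb : Bornology.IsBounded Ω)
    (hu : ContDiff ℝ (⊤ : ℕ∞) u) (h0 : ∀ x ∈ frontier Ω, u x = 0 ∧ fderiv ℝ u x = 0)
    {e : EuclideanSpace ℝ (Fin n)} (he : ‖e‖ = 1) (c : ℝ) :
    4 * ∫ x in Ω, (⟪e, x⟫ - c) * u x * dirDeriv e (lap u) x
      = 2 * dirichletEnergy Ω u + 4 * ∫ x in Ω, (dirDeriv e u x) ^ 2 := by
  have hg := affine_smooth e c
  have hu' := fun v => dirDeriv_smooth v hu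
  have hv : ∀ v, ∀ x ∈ frontier Ω, dirDeriv v u x = 0 :=
    fun v x hx => by simp [dirDeriv, (h0 x hx).2]
  have hint : ∀ {f : EuclideanSpace ℝ (Fin n) → ℝ}, Continuous f → IntegrableOn f Ω :=
    fun hf => continuous_integrableOn_of_bounded hΩb hf
  -- `∂ₑ` is moved from `Δu` onto `g u`.
  have h1 := integral_dirDeriv_mul hΩo hΩb (hg.mul hu) (lap_smooth hu)
    (fun x hx => by simp [(h0 x hx).1]) e
  rw [dirDeriv_mul e hg hu, dirDeriv_affine, real_inner_self_eq_norm_sq, he] at h1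
  simp only [one_pow, one_mul, add_mul] at h1
  rw [integral_add (hint (hu.continuous.fun_mul (lap_smooth hu).continuous))
    (hint ((hg.continuous.fun_mul (hu' e).continuous).fun_mul (lap_smooth hu).continuous)),
    integral_mul_lap_self hΩo hΩb hu fun x hx => (h0 x hx).1] at h1
  -- Green's identity for `g ∂ₑu` against `Δu`.
  have h2 := integral_mul_lap hΩo hΩb (hg.mul (hu' e)) hu (fun x hx => by simp [hv e x hx])
  have h3 : ∀ k : Fin n, ∫ x in Ω, dirDeriv (EuclideanSpace.single k 1)
      (fun x => (⟪e, x⟫ - c) * dirDeriv e u x) x * dirDeriv (EuclideanSpace.single k 1) u x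
      = (∫ x in Ω, (⟪e, EuclideanSpace.single k 1⟫ * dirDeriv (EuclideanSpace.single k 1) u x)
          * dirDeriv e u x)
        + -(1 / 2) * ∫ x in Ω, (dirDeriv (EuclideanSpace.single k 1) u x) ^ 2 := by
    intro k
    rw [← integral_affine_mul_dirDeriv hΩo hΩb (hu' _) (hv _) he c, ← integral_add
      (hint ((continuous_const.fun_mul (hu' _).continuous).fun_mul (hu' e).continuous))
      (hint ((hg.continuous.fun_mul (hu' _).continuous).fun_mul
        (dirDeriv_smooth e (hu' _)).continuous)),
      dirDeriv_mul _ hg (hu' e), dirDeriv_affine, dirDeriv_comm _ e hu]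
    congr 1
    funext x
    ring
  simp only [h3] at h2
  rw [Finset.sum_add_distrib, ← Finset.mul_sum, ← integral_finsetSum _ fun k _ =>
    hint ((continuous_const.fun_mul (hu' _).continuous).fun_mul (hu' e).continuous)] at h2
  simp only [← Finset.sum_mul, sum_inner_mul_dirDeriv, ← pow_two] at h2
  change _ = -(_ + -(1 / 2) * dirichletEnergy Ω u) at h2
  linarith

end Identities

/-! ### Smooth extension and local dependence of the bi-Laplacian -/

/-- A function smooth near the closure of `Ω` agrees near that closure with a smooth function on
the whole space (multiply by a cutoff). -/
lemma exists_smooth_extension {n : ℕ} {Ω U : Set (EuclideanSpace ℝ (Fin n))} (hU : IsOpen U)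
    (hΩU : closure Ω ⊆ U) {f : EuclideanSpace ℝ (Fin n) → ℝ}
    (hf : ContDiffOn ℝ (⊤ : ℕ∞) f U) :
    ∃ w : EuclideanSpace ℝ (Fin n) → ℝ, ContDiff ℝ (⊤ : ℕ∞) w ∧
      ∀ x ∈ closure Ω, w =ᶠ[nhds x] f := by
  obtain ⟨χ, hχ0, hχ1, -⟩ := exists_contMDiffMap_zero_one_nhds_of_isClosed
    (modelWithCornersSelf ℝ (EuclideanSpace ℝ (Fin n))) (n := (⊤ : ℕ∞)) hU.isClosed_compl
    (isClosed_closure (s := Ω)) (Set.disjoint_compl_left_iff_subset.2 hΩU)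
  have hχ : ContDiff ℝ (⊤ : ℕ∞) χ := χ.contMDiff.contDiff
  refine ⟨fun x => χ x * f x, contDiff_iff_contDiffAt.2 fun x => ?_, fun x hx => ?_⟩
  · by_cases hx : x ∈ U
    · exact hχ.contDiffAt.mul (hf.contDiffAt (hU.mem_nhds hx))
    · refine (contDiffAt_const (c := (0 : ℝ))).congr_of_eventuallyEq ?_
      filter_upwards [Filter.Eventually.filter_mono (nhds_le_nhdsSet (show x ∈ Uᶜ from hx)) hχ0]
        with y hy
      simp [hy]
  · filter_upwards [Filter.Eventually.filter_mono (nhds_le_nhdsSet hx) hχ1] with y hy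
    simp [hy]

lemma lap_congr {n : ℕ} {f g : EuclideanSpace ℝ (Fin n) → ℝ} {x : EuclideanSpace ℝ (Fin n)}
    (h : f =ᶠ[nhds x] g) : lap f =ᶠ[nhds x] lap g := by
  filter_upwards [h.eventuallyEq_nhds] with y hy
  refine Finset.sum_congr rfl fun k _ => ?_
  have : (fun z => fderiv ℝ f z (EuclideanSpace.single k 1))
      =ᶠ[nhds y] fun z => fderiv ℝ g z (EuclideanSpace.single k 1) := by
    filter_upwards [hy.fderiv (𝕜 := ℝ)] with z hz
    rw [hz]
  rw [this.fderiv_eq]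

lemma bilap_congr {n : ℕ} {f g : EuclideanSpace ℝ (Fin n) → ℝ} {x : EuclideanSpace ℝ (Fin n)}
    (h : f =ᶠ[nhds x] g) : bilap f x = bilap g x :=
  (lap_congr (lap_congr h)).eq_of_nhds

/-! ### Eigenvalue estimates -/

/-- `(∫ |∇u|²)² ≤ ∫ u² · ∫ (Δu)² = Γ` for a normalized clamped eigenfunction. -/
lemma dirichletEnergy_le_sqrt {n : ℕ} {Ω : Set (EuclideanSpace ℝ (Fin n))} (hΩo : IsOpen Ω)
    (hΩb : Bornology.IsBounded Ω) {u : EuclideanSpace ℝ (Fin n) → ℝ} {G : ℝ} (hG : 0 < G)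
    (hu : ContDiff ℝ (⊤ : ℕ∞) u) (h0 : ∀ x ∈ frontier Ω, u x = 0 ∧ fderiv ℝ u x = 0)
    (hnorm : ∫ x in Ω, (u x) ^ 2 = 1) (heig : ∀ x ∈ Ω, bilap u x = G * u x) :
    dirichletEnergy Ω u ≤ √G := by
  have hint : ∀ {f : EuclideanSpace ℝ (Fin n) → ℝ}, Continuous f → IntegrableOn f Ω :=
    fun hf => continuous_integrableOn_of_bounded hΩb hf
  have hlap := (lap_smooth hu).continuous
  have h1 : ∫ x in Ω, (lap u x) ^ 2 = G := by
    rw [integral_lap_sq hΩo hΩb hu h0]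
    have : ∫ x in Ω, u x * bilap u x = ∫ x in Ω, G * (u x) ^ 2 := by
      refine setIntegral_congr_fun hΩo.measurableSet fun x hx => ?_
      simp only [heig x hx]
      ring
    rw [this, integral_const_mul, hnorm, mul_one]
  have h2 := integral_mul_lap_self hΩo hΩb hu fun x hx => (h0 x hx).1
  have h3 : 0 ≤ ∫ x in Ω, (√G * u x + lap u x) ^ 2 := integral_nonneg fun x => sq_nonneg _
  have h4 : ∫ x in Ω, (√G * u x + lap u x) ^ 2
      = (√G) ^ 2 * (∫ x in Ω, (u x) ^ 2) + 2 * √G * (∫ x in Ω, u x * lap u x)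
        + ∫ x in Ω, (lap u x) ^ 2 := by
    rw [← integral_const_mul, ← integral_const_mul,
      ← integral_add (hint (continuous_const.fun_mul (hu.continuous.fun_pow 2)))
        (hint (continuous_const.fun_mul (hu.continuous.fun_mul hlap))),
      ← integral_add (hint ((continuous_const.fun_mul (hu.continuous.fun_pow 2)).fun_add
        (continuous_const.fun_mul (hu.continuous.fun_mul hlap)))) (hint (hlap.fun_pow 2))]
    congr 1
    funext x
    ring
  have hs : 0 < √G := Real.sqrt_pos.2 hG
  rw [h4, hnorm, h2, h1, Real.sq_sqrt hG.le] at h3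
  have h5 : √G * dirichletEnergy Ω u ≤ √G * √G := by
    rw [Real.mul_self_sqrt hG.le]
    linarith
  exact le_of_mul_le_mul_left h5 hs

/-- The gap estimate in one direction `e`. The hypothesis `hRR` is the Rayleigh–Ritz inequality
for the trial function `g u`, where `g = ⟪e, ·⟫ - c`. The square root of the gap is extracted by
expanding `0 ≤ ∫ (√(G' - G) g u + 2 ∂ₑu)²` with `∫ g u ∂ₑu = -1/2`. -/
lemma sqrt_gap_le {n : ℕ} {Ω : Set (EuclideanSpace ℝ (Fin n))} (hΩo : IsOpen Ω)
    (hΩb : Bornology.IsBounded Ω) {u : EuclideanSpace ℝ (Fin n) → ℝ} {G G' : ℝ} (hGG' : G ≤ G')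
    (hu : ContDiff ℝ (⊤ : ℕ∞) u) (h0 : ∀ x ∈ frontier Ω, u x = 0 ∧ fderiv ℝ u x = 0)
    (hnorm : ∫ x in Ω, (u x) ^ 2 = 1) (heig : ∀ x ∈ Ω, bilap u x = G * u x)
    {e : EuclideanSpace ℝ (Fin n)} (he : ‖e‖ = 1) (c : ℝ)
    (hRR : ¬ ((fun x => (⟪e, x⟫ - c) * u x) =ᵐ[volume.restrict Ω] 0) →
      G' * ∫ x in Ω, ((⟪e, x⟫ - c) * u x) ^ 2
        ≤ ∫ x in Ω, ((⟪e, x⟫ - c) * u x) * bilap (fun x => (⟪e, x⟫ - c) * u x) x) :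
    √(G' - G) ≤ dirichletEnergy Ω u + 4 * ∫ x in Ω, (dirDeriv e u x) ^ 2 := by
  have hint : ∀ {f : EuclideanSpace ℝ (Fin n) → ℝ}, Continuous f → IntegrableOn f Ω :=
    fun hf => continuous_integrableOn_of_bounded hΩb hf
  have hφ : Continuous fun x => (⟪e, x⟫ - c) * u x :=
    (affine_smooth e c).continuous.fun_mul hu.continuous
  have hd := (dirDeriv_smooth e hu).continuous
  have hdl := (dirDeriv_smooth e (lap_smooth hu)).continuous
  have hhalf := integral_affine_mul_dirDeriv hΩo hΩb hu (fun x hx => (h0 x hx).1) he c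
  rw [hnorm] at hhalf
  have hne : ¬ ((fun x => (⟪e, x⟫ - c) * u x) =ᵐ[volume.restrict Ω] 0) := by
    intro h
    have : ∫ x in Ω, (⟪e, x⟫ - c) * u x * dirDeriv e u x = 0 := by
      refine integral_eq_zero_of_ae ?_
      filter_upwards [h] with x hx
      simp only [Pi.zero_apply] at hx ⊢
      rw [hx, zero_mul]
    rw [this] at hhalf
    norm_num at hhalf
  have h1 := hRR hne
  have h2 : ∫ x in Ω, ((⟪e, x⟫ - c) * u x) * bilap (fun x => (⟪e, x⟫ - c) * u x) x
      = G * (∫ x in Ω, ((⟪e, x⟫ - c) * u x) ^ 2)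
        + 4 * ∫ x in Ω, (⟪e, x⟫ - c) * u x * dirDeriv e (lap u) x := by
    rw [← integral_const_mul, ← integral_const_mul,
      ← integral_add (hint (continuous_const.fun_mul (hφ.fun_pow 2)))
        (hint (continuous_const.fun_mul (hφ.fun_mul hdl)))]
    refine setIntegral_congr_fun hΩo.measurableSet fun x hx => ?_
    simp only [bilap_affine_mul e c hu, heig x hx]
    ring
  rw [h2, integral_affine_mul_dirDeriv_lap hΩo hΩb hu h0 he c] at h1
  have h3 : 0 ≤ ∫ x in Ω, (√(G' - G) * ((⟪e, x⟫ - c) * u x) + 2 * dirDeriv e u x) ^ 2 :=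
    integral_nonneg fun x => sq_nonneg _
  have h4 : ∫ x in Ω, (√(G' - G) * ((⟪e, x⟫ - c) * u x) + 2 * dirDeriv e u x) ^ 2
      = √(G' - G) ^ 2 * (∫ x in Ω, ((⟪e, x⟫ - c) * u x) ^ 2)
        + 4 * √(G' - G) * (∫ x in Ω, (⟪e, x⟫ - c) * u x * dirDeriv e u x)
        + 4 * ∫ x in Ω, (dirDeriv e u x) ^ 2 := by
    rw [← integral_const_mul, ← integral_const_mul, ← integral_const_mul,
      ← integral_add (hint (continuous_const.fun_mul (hφ.fun_pow 2)))
        (hint (continuous_const.fun_mul (hφ.fun_mul hd))),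
      ← integral_add (hint ((continuous_const.fun_mul (hφ.fun_pow 2)).fun_add
        (continuous_const.fun_mul (hφ.fun_mul hd))))
        (hint (continuous_const.fun_mul (hd.fun_pow 2)))]
    congr 1
    funext x
    ring
  rw [h4, hhalf, Real.sq_sqrt (sub_nonneg.2 hGG')] at h3
  linarith

/-- For a nonempty bounded open set `Ω ⊆ ℝⁿ` (with smooth boundary) and clamped plate
eigenvalues `Γ₁ ≤ ⋯ ≤ Γ_{n+1}` (here `Γ 0, …, Γ n`) with orthonormal eigenfunctions
satisfying the Rayleigh–Ritz property, one has
`Σ_{i=1}^{n} ((Γ_{i+1} − Γ₁)^{1/2} − Γ₁^{1/2}) ≤ 4 Γ₁^{1/2}`. -/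
theorem clamped_plate_lower_eigenvalues_euclidean_corollary
    {n : ℕ} (hn : 1 ≤ n) (Ω : Set (EuclideanSpace ℝ (Fin n)))
    (hΩo : IsOpen Ω) (hΩb : Bornology.IsBounded Ω) (hΩne : Ω.Nonempty)
    (Γ : ℕ → ℝ) (u : ℕ → EuclideanSpace ℝ (Fin n) → ℝ)
    (hpos : ∀ i ≤ n, 0 < Γ i)
    (hmono : ∀ i < n, Γ i ≤ Γ (i + 1))
    (hsmooth : ∀ i ≤ n, ∃ U : Set (EuclideanSpace ℝ (Fin n)),
      IsOpen U ∧ closure Ω ⊆ U ∧ ContDiffOn ℝ (⊤ : ℕ∞) (u i) U)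
    (hbc : ∀ i ≤ n, ∀ x ∈ frontier Ω, u i x = 0 ∧ fderiv ℝ (u i) x = 0)
    (hortho : ∀ i ≤ n, ∀ j ≤ n,
      ∫ x in Ω, u i x * u j x = if i = j then 1 else 0)
    (heigen : ∀ i ≤ n, ∀ x ∈ Ω, bilap (u i) x = Γ i * u i x)
    (hRR : ∀ k, 1 ≤ k → k ≤ n → ∀ φ : EuclideanSpace ℝ (Fin n) → ℝ,
      (∃ U : Set (EuclideanSpace ℝ (Fin n)),
        IsOpen U ∧ closure Ω ⊆ U ∧ ContDiffOn ℝ (⊤ : ℕ∞) φ U) →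
      (∀ x ∈ frontier Ω, φ x = 0 ∧ fderiv ℝ φ x = 0) →
      ¬ (φ =ᵐ[volume.restrict Ω] 0) →
      (∀ j < k, ∫ x in Ω, φ x * u j x = 0) →
      Γ k * ∫ x in Ω, (φ x) ^ 2 ≤ ∫ x in Ω, φ x * bilap φ x) :
    ∑ i ∈ Finset.range n, (Real.sqrt (Γ (i + 1) - Γ 0) - Real.sqrt (Γ 0)) ≤
      4 * Real.sqrt (Γ 0) := by
  choose! U hUo hUc hUs using hsmooth
  choose! w hws hwu using fun i (hi : i ≤ n) =>
    exists_smooth_extension (hUo i hi) (hUc i hi) (hUs i hi)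
  have heq : ∀ i ≤ n, ∀ x ∈ Ω, w i x = u i x :=
    fun i hi x hx => (hwu i hi x (subset_closure hx)).eq_of_nhds
  have hw0 := hws 0 (Nat.zero_le n)
  have hbc0 : ∀ x ∈ frontier Ω, w 0 x = 0 ∧ fderiv ℝ (w 0) x = 0 := by
    intro x hx
    have h := hwu 0 (Nat.zero_le n) x (frontier_subset_closure hx)
    rw [h.eq_of_nhds, h.fderiv_eq]
    exact hbc 0 (Nat.zero_le n) x hx
  have hortho' : ∀ j ≤ n, ∫ x in Ω, w 0 x * w j x = if 0 = j then 1 else 0 := by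
    intro j hj
    rw [← hortho 0 (Nat.zero_le n) j hj]
    refine setIntegral_congr_fun hΩo.measurableSet fun x hx => ?_
    simp only [heq 0 (Nat.zero_le n) x hx, heq j hj x hx]
  have hnorm : ∫ x in Ω, (w 0 x) ^ 2 = 1 := by
    have := hortho' 0 (Nat.zero_le n)
    simpa only [pow_two, if_true] using this
  have heig : ∀ x ∈ Ω, bilap (w 0) x = Γ 0 * w 0 x := by
    intro x hx
    rw [bilap_congr (hwu 0 (Nat.zero_le n) x (subset_closure hx)), heq 0 (Nat.zero_le n) x hx]
    exact heigen 0 (Nat.zero_le n) x hx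
  have hmono0 : ∀ k ≤ n, Γ 0 ≤ Γ k := by
    intro k
    induction k with
    | zero => exact fun _ => le_rfl
    | succ k ih => exact fun hk => (ih (by omega)).trans (hmono k (by omega))
  -- Gram–Schmidt on the moments `∫ x u₁ u_{j+1}` gives directions making each trial function
  -- orthogonal to all the lower eigenfunctions.
  let M : ℕ → EuclideanSpace ℝ (Fin n) := fun j => ∫ x in Ω, (w 0 x * w j x) • x
  have hM : ∀ j ≤ n, ∀ e : EuclideanSpace ℝ (Fin n),
      ∫ x in Ω, ⟪e, x⟫ * (w 0 x * w j x) = ⟪e, M j⟫ := by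
    intro j hj e
    have hi : IntegrableOn (fun x : EuclideanSpace ℝ (Fin n) => (w 0 x * w j x) • x) Ω := by
      refine (ContinuousOn.integrableOn_compact hΩb.isCompact_closure
        (Continuous.continuousOn ?_)).mono_set subset_closure
      exact (hw0.continuous.fun_mul (hws j hj).continuous).smul continuous_id
    rw [← integral_inner hi e]
    congr 1
    funext x
    rw [inner_smul_right]
    ring
  have hfin : Module.finrank ℝ (EuclideanSpace ℝ (Fin n)) = Fintype.card (Fin n) := by simp
  let b := InnerProductSpace.gramSchmidtOrthonormalBasis hfin fun j : Fin n => M (j + 1)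
  have hb : ∀ i j : Fin n, j < i → ⟪b i, M (j + 1)⟫ = 0 := fun i j hij =>
    InnerProductSpace.gramSchmidtOrthonormalBasis_inv_triangular hfin
      (fun j : Fin n => M (j + 1)) hij
  have hgap : ∀ i : Fin n, √(Γ (i + 1) - Γ 0)
      ≤ dirichletEnergy Ω (w 0) + 4 * ∫ x in Ω, (dirDeriv (b i) (w 0) x) ^ 2 := by
    intro i
    have hφs : ContDiff ℝ (⊤ : ℕ∞) fun x => (⟪b i, x⟫ - ⟪b i, M 0⟫) * w 0 x :=
      (affine_smooth _ _).mul hw0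
    refine sqrt_gap_le hΩo hΩb (hmono0 _ (by omega)) hw0 hbc0 hnorm heig
      (b.orthonormal.1 i) ⟪b i, M 0⟫ fun hne => ?_
    refine hRR (i + 1) (by omega) (by omega) _
      ⟨Set.univ, isOpen_univ, Set.subset_univ _, hφs.contDiffOn⟩ ?_ hne ?_
    · intro x hx
      obtain ⟨h1, h2⟩ := hbc0 x hx
      refine ⟨by simp [h1], ?_⟩
      rw [fderiv_fun_mul ((affine_smooth _ _).differentiable (by simp) x)
        (hw0.differentiable (by simp) x), h1, h2]
      simp
    · intro j hj
      have hjn : j ≤ n := by omega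
      have h1 : ∫ x in Ω, (⟪b i, x⟫ - ⟪b i, M 0⟫) * w 0 x * u j x
          = (∫ x in Ω, ⟪b i, x⟫ * (w 0 x * w j x))
            - ⟪b i, M 0⟫ * ∫ x in Ω, w 0 x * w j x := by
        have hc := hw0.continuous.fun_mul (hws j hjn).continuous
        have hl : Continuous fun x : EuclideanSpace ℝ (Fin n) => ⟪b i, x⟫ :=
          continuous_const.inner continuous_id
        rw [← integral_const_mul,
          ← integral_sub (continuous_integrableOn_of_bounded hΩb (hl.fun_mul hc))
            (continuous_integrableOn_of_bounded hΩb (continuous_const.fun_mul hc))]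
        refine setIntegral_congr_fun hΩo.measurableSet fun x hx => ?_
        simp only [heq j hjn x hx]
        ring
      rw [h1, hM j hjn, hortho' j hjn]
      rcases j with _ | j
      · simp
      · rw [hb i ⟨j, by omega⟩ (Fin.lt_def.2 (by simpa using hj))]
        simp
  have hD : dirichletEnergy Ω (w 0) ≤ √(Γ 0) :=
    dirichletEnergy_le_sqrt hΩo hΩb (hpos 0 (Nat.zero_le n)) hw0 hbc0 hnorm heig
  have hsum : ∑ i : Fin n, √(Γ (i + 1) - Γ 0) ≤ ((n : ℝ) + 4) * dirichletEnergy Ω (w 0) := by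
    refine (Finset.sum_le_sum fun i _ => hgap i).trans (le_of_eq ?_)
    rw [Finset.sum_add_distrib, ← Finset.mul_sum, sum_integral_sq_dirDeriv hΩb hw0 b]
    simp
    ring
  rw [Finset.sum_sub_distrib, Finset.sum_range fun i => √(Γ (i + 1) - Γ 0)]
  simp only [Finset.sum_const, Finset.card_range, nsmul_eq_mul]
  have hn4 : ((n : ℝ) + 4) * dirichletEnergy Ω (w 0) ≤ ((n : ℝ) + 4) * √(Γ 0) :=
    mul_le_mul_of_nonneg_left hD (by positivity)
  linarith
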